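/- Let A be a self-adjoint operator with domain D(A) in a separable complex Hilbert space H and 𝓛 ⊆ D(A) a finite-dimensional subspace. Suppose μ = α + iβ with α, β ∈ ℝ, β ≠ 0, and suppose u ∈ 𝓛 is nonzero and satisfies ⟨(μ−A)u, (μ̄−A)v⟩ = 0 for all v ∈ 𝓛. Then β² = ‖(α−A)u‖²/‖u‖² and ⟨(A−α)u, u⟩ = 0. -/

import Mathlib

open scoped InnerProductSpace

variable {H : Type*} [NormedAddCommGroup H] [InnerProductSpace ℂ H] [CompleteSpace H]

/-! With `w = (A - α)u`, taking `v = u` gives `‖w‖² + 2iβ⟪w, u⟫ - β²‖u‖² = 0`. Since `A` is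
symmetric, `⟪w, u⟫` is real, so the real part is `‖w‖² = β²‖u‖²` and the imaginary part is
`2β⟪w, u⟫ = 0`. -/

section RCLike

open scoped ComplexConjugate

variable {𝕜 E : Type*} [RCLike 𝕜] [NormedAddCommGroup E] [InnerProductSpace 𝕜 E]
  {T S : E →ₗ.[𝕜] E}

theorem isFormalAdjoint_self_of_isSelfAdjoint [CompleteSpace E] (hT : IsSelfAdjoint T) :
    T.IsFormalAdjoint T := by
  simpa only [LinearPMap.isSelfAdjoint_def.mp hT] using
    LinearPMap.adjoint_isFormalAdjoint hT.dense_domain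

theorem inner_sub_smul_left_of_isFormalAdjoint (hTS : T.IsFormalAdjoint S) (c : 𝕜)
    (u : T.domain) (v : S.domain) :
    ⟪T u - c • (u : E), v⟫_𝕜 = ⟪(u : E), S v - conj c • (v : E)⟫_𝕜 := by
  simp only [inner_sub_left, inner_sub_right, inner_smul_left, inner_smul_right, hTS u v]

theorem inner_sub_ofReal_smul_left_of_isFormalAdjoint (hTS : T.IsFormalAdjoint S) (α : ℝ)
    (u : T.domain) (v : S.domain) :
    ⟪T u - (α : 𝕜) • (u : E), v⟫_𝕜 = ⟪(u : E), S v - (α : 𝕜) • (v : E)⟫_𝕜 := by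
  simpa only [RCLike.conj_ofReal] using inner_sub_smul_left_of_isFormalAdjoint hTS (α : 𝕜) u v

theorem im_inner_sub_ofReal_smul_self_of_isFormalAdjoint (hT : T.IsFormalAdjoint T) (α : ℝ)
    (u : T.domain) : RCLike.im ⟪T u - (α : 𝕜) • (u : E), u⟫_𝕜 = 0 := by
  rw [← RCLike.conj_eq_iff_im, inner_conj_symm,
    inner_sub_ofReal_smul_left_of_isFormalAdjoint hT]

end RCLike

section Complex

variable {E : Type*} [NormedAddCommGroup E] [InnerProductSpace ℂ E] {T : E →ₗ.[ℂ] E}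

theorem inner_smul_sub_conj_smul_sub_of_isFormalAdjoint (hT : T.IsFormalAdjoint T) (α β : ℝ)
    (u v : T.domain) :
    ⟪((α : ℂ) + β * Complex.I) • (u : E) - T u, ((α : ℂ) - β * Complex.I) • (v : E) - T v⟫_ℂ =
      ⟪T u - (α : ℂ) • (u : E), T v - (α : ℂ) • (v : E)⟫_ℂ +
        2 * Complex.I * β * ⟪T u - (α : ℂ) • (u : E), v⟫_ℂ - β ^ 2 * ⟪(u : E), v⟫_ℂ := by
  have shift_symm : ⟪T u - (α : ℂ) • (u : E), v⟫_ℂ = ⟪(u : E), T v - (α : ℂ) • (v : E)⟫_ℂ :=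
    inner_sub_ofReal_smul_left_of_isFormalAdjoint hT α u v
  have left_eq : ((α : ℂ) + β * Complex.I) • (u : E) - T u =
      (β * Complex.I) • (u : E) - (T u - (α : ℂ) • (u : E)) := by module
  have right_eq : ((α : ℂ) - β * Complex.I) • (v : E) - T v =
      -((β * Complex.I) • (v : E)) - (T v - (α : ℂ) • (v : E)) := by module
  rw [left_eq, right_eq]
  generalize T u - (α : ℂ) • (u : E) = w at *
  generalize T v - (α : ℂ) • (v : E) = z at *
  simp only [inner_sub_left, inner_sub_right, inner_neg_right, inner_smul_left, inner_smul_right,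
    map_mul, Complex.conj_ofReal, Complex.conj_I, ← shift_symm]
  linear_combination (β : ℂ) ^ 2 * ⟪(u : E), v⟫_ℂ * Complex.I_sq

theorem beta_sq_eq_residual_general (hT : T.IsFormalAdjoint T) {α β : ℝ} (hβ : β ≠ 0)
    {u : T.domain} (hu : u ≠ 0)
    (horth : ⟪((α : ℂ) + β * Complex.I) • (u : E) - T u,
      ((α : ℂ) - β * Complex.I) • (u : E) - T u⟫_ℂ = 0) :
    β ^ 2 = ‖(α : ℂ) • (u : E) - T u‖ ^ 2 / ‖(u : E)‖ ^ 2 ∧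
      ⟪T u - (α : ℂ) • (u : E), u⟫_ℂ = 0 := by
  have inner_im : (⟪T u - (α : ℂ) • (u : E), u⟫_ℂ).im = 0 :=
    im_inner_sub_ofReal_smul_self_of_isFormalAdjoint hT α u
  rw [inner_smul_sub_conj_smul_sub_of_isFormalAdjoint hT, inner_self_eq_norm_sq_to_K,
    inner_self_eq_norm_sq_to_K] at horth
  rw [norm_sub_rev]
  generalize T u - (α : ℂ) • (u : E) = w at *
  have norm_sq_eq : ‖w‖ ^ 2 = β ^ 2 * ‖(u : E)‖ ^ 2 := by
    simpa [← Complex.ofReal_pow, inner_im, sub_eq_zero] using congrArg Complex.re horth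
  have inner_re : (⟪w, u⟫_ℂ).re = 0 := by
    simpa [← Complex.ofReal_pow, hβ] using congrArg Complex.im horth
  have norm_sq_ne_zero : ‖(u : E)‖ ^ 2 ≠ 0 := by simpa using hu
  exact ⟨eq_div_of_mul_eq norm_sq_ne_zero norm_sq_eq.symm, Complex.ext inner_re inner_im⟩

end Complex

/-- if `μ = α + iβ` with `β ≠ 0` and `0 ≠ u ∈ 𝓛` satisfies
`⟨(μ−A)u, (μ̄−A)v⟩ = 0` for all `v ∈ 𝓛`, then `β² = ‖(α−A)u‖²/‖u‖²` and
`⟨(A−α)u, u⟩ = 0`. -/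
theorem beta_sq_eq_residual
    [TopologicalSpace.SeparableSpace H]
    (T : H →ₗ.[ℂ] H) (hT : IsSelfAdjoint T)
    (L : Submodule ℂ T.domain) (hfd : FiniteDimensional ℂ L)
    (α β : ℝ) (hβ : β ≠ 0)
    (u : L) (hu : u ≠ 0)
    (horth : ∀ v : L,
      ⟪((α : ℂ) + (β : ℂ) * Complex.I) • ((u : T.domain) : H) - T (u : T.domain),
        ((α : ℂ) - (β : ℂ) * Complex.I) • ((v : T.domain) : H) - T (v : T.domain)⟫_ℂ = 0) :
    β ^ 2 = ‖(α : ℂ) • ((u : T.domain) : H) - T (u : T.domain)‖ ^ 2 / ‖((u : T.domain) : H)‖ ^ 2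
    ∧ ⟪T (u : T.domain) - (α : ℂ) • ((u : T.domain) : H), ((u : T.domain) : H)⟫_ℂ = 0 := by
  exact beta_sq_eq_residual_general (isFormalAdjoint_self_of_isSelfAdjoint hT) hβ
    (by simpa using hu) (horth u)
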